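/- arXiv:2605.03595 — 3 statements merged into one kernel-verified Lean document; each statement's English description precedes it below -/
import Mathlib

section
/- Let Δt > 0 and define g(x) = x + 4x(1 - x²)Δt on ℝ. If x₀ ∈ ℝ satisfies x₀² ≥ 1 + 3/(4Δt), then the iterates xₙ = g⁽ⁿ⁾(x₀) (the n-fold iterate of g applied to x₀) satisfy |xₙ| ≥ 2ⁿ |x₀| for every n ∈ ℕ; in particular |xₙ| → ∞ as n → ∞. -/
theorem stmt_1 (Δt : ℝ) (hΔt : 0 < Δt)
    (g : ℝ → ℝ) (hg : ∀ x, g x = x + 4 * x * (1 - x ^ 2) * Δt)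
    (x₀ : ℝ) (hx₀ : x₀ ^ 2 ≥ 1 + 3 / (4 * Δt)) :
    (∀ n : ℕ, |g^[n] x₀| ≥ 2 ^ n * |x₀|) ∧
      Filter.Tendsto (fun n : ℕ => |g^[n] x₀|) Filter.atTop Filter.atTop := by
  have hpos : 0 < 3 / (4 * Δt) := by positivity
  have step : ∀ x : ℝ, x ^ 2 ≥ 1 + 3 / (4 * Δt) → 2 * |x| ≤ |g x| := by
    intro x hx
    have h1 : 3 / (4 * Δt) * (4 * Δt) = 3 := by field_simp
    have h2 : 1 + 4 * (1 - x ^ 2) * Δt ≤ -2 := by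
      have h3 := mul_le_mul_of_nonneg_right hx (by positivity : (0 : ℝ) ≤ 4 * Δt)
      nlinarith
    have h4 : g x = (1 + 4 * (1 - x ^ 2) * Δt) * x := by rw [hg]; ring
    rw [h4, abs_mul]
    apply mul_le_mul_of_nonneg_right _ (abs_nonneg x)
    rw [abs_of_neg (by linarith)]
    linarith
  have key : ∀ n : ℕ, 2 ^ n * |x₀| ≤ |g^[n] x₀| := by
    intro n
    induction n with
    | zero => simp
    | succ k ih =>
      have hle : |x₀| ≤ |g^[k] x₀| :=
        le_trans (le_mul_of_one_le_left (abs_nonneg _) (one_le_pow₀ (by norm_num))) ih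
      have hs := step (g^[k] x₀) (le_trans hx₀ (sq_le_sq.mpr hle))
      rw [Function.iterate_succ_apply', pow_succ]
      linarith
  refine ⟨key, Filter.tendsto_atTop_mono key ?_⟩
  have hx : 0 < |x₀| := by
    rw [abs_pos]
    rintro rfl
    norm_num at hx₀
    linarith
  exact (tendsto_pow_atTop_atTop_of_one_lt (by norm_num)).atTop_mul_const hx
end

section
/- Let ρ > 0 and λ > 5/2 + 1/(2ρ²). Define β(x) = −8x(x−1)²(x+1) + 2/5 − (4/5)λ(x−1)² for x ∈ ℝ. Then β(x) < 0 for every x ∈ ℝ with (x−1)² ≥ ρ². -/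
theorem stmt_8 (ρ lam : ℝ) (hρ : 0 < ρ) (hlam : lam > 5 / 2 + 1 / (2 * ρ ^ 2))
    (β : ℝ → ℝ)
    (hβ : ∀ x, β x = -8 * x * (x - 1) ^ 2 * (x + 1) + 2 / 5
        - (4 / 5) * lam * (x - 1) ^ 2) :
    ∀ x : ℝ, (x - 1) ^ 2 ≥ ρ ^ 2 → β x < 0 := by
  intro x hx
  rw [hβ]
  have hr : 0 < ρ ^ 2 := by positivity
  have h0 : 0 < 1 / (2 * ρ ^ 2) := by positivity
  have hc : 1 / (2 * ρ ^ 2) < lam - 5 / 2 := by linarith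
  have h1 : 1 < (lam - 5 / 2) * (2 * ρ ^ 2) := (div_lt_iff₀ (by positivity)).1 hc
  have h2 : (lam - 5 / 2) * ρ ^ 2 ≤ (lam - 5 / 2) * (x - 1) ^ 2 :=
    mul_le_mul_of_nonneg_left hx (by linarith)
  have h3 : 0 ≤ (x - 1) ^ 2 * (2 * x + 1) ^ 2 := by positivity
  nlinarith [h1, h2, h3]
end

section
/- Let X be a measurable space, κ a Markov transition kernel from X to X, and G₀ ⊆ X a measurable set. Define inductively G_{n+1} = G_n ∪ {x ∈ X : κ(x, G_n) > 2^{−(n+1)}} for n ∈ ℕ. Then each G_n is measurable, the sequence (G_n) is nondecreasing, and for every x ∉ ⋃_{n∈ℕ} G_n one has κ(x, ⋃_{n∈ℕ} G_n) = 0; in particular κ(x, G₀) = 0 for such x. -/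
open MeasureTheory ProbabilityTheory

theorem stmt_15 {X : Type*} [MeasurableSpace X]
    (κ : Kernel X X) [IsMarkovKernel κ]
    (G₀ : Set X) (hG₀ : MeasurableSet G₀)
    (G : ℕ → Set X) (hG0 : G 0 = G₀)
    (hGsucc : ∀ n : ℕ,
      G (n + 1) = G n ∪ {x : X | κ x (G n) > (2 : ENNReal) ^ (-(n + 1 : ℤ))}) :
    (∀ n, MeasurableSet (G n)) ∧ Monotone G ∧
      ∀ x ∉ ⋃ n, G n, κ x (⋃ n, G n) = 0 ∧ κ x G₀ = 0 := by
  have hmeas : ∀ n, MeasurableSet (G n) := by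
    intro n
    induction n with
    | zero => rw [hG0]; exact hG₀
    | succ n ih =>
      rw [hGsucc]
      exact ih.union (measurableSet_lt measurable_const (κ.measurable_coe ih))
  have hmono : Monotone G := by
    refine monotone_nat_of_le_succ fun n => ?_
    rw [hGsucc]
    exact Set.subset_union_left
  refine ⟨hmeas, hmono, fun x hx => ?_⟩
  have hle : ∀ n : ℕ, κ x (G n) ≤ (2⁻¹ : ENNReal) ^ (n + 1) := by
    intro n
    have h1 : x ∉ G (n + 1) := fun h => hx (Set.mem_iUnion.2 ⟨_, h⟩)
    rw [hGsucc] at h1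
    have h2 : ¬ (κ x (G n) > (2 : ENNReal) ^ (-(n + 1 : ℤ))) := fun h => h1 (Or.inr h)
    have h3 : (2 : ENNReal) ^ (-(n + 1 : ℤ)) = (2⁻¹ : ENNReal) ^ (n + 1) := by
      rw [ENNReal.zpow_neg, ← ENNReal.inv_pow]
      norm_cast
    rw [← h3]
    exact not_lt.1 h2
  have hlim : Filter.Tendsto (fun n : ℕ => (2⁻¹ : ENNReal) ^ (n + 1)) Filter.atTop (nhds 0) :=
    (ENNReal.tendsto_pow_atTop_nhds_zero_of_lt_one (by simp)).comp (Filter.tendsto_add_atTop_nat 1)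
  have hz : ∀ m, κ x (G m) = 0 := by
    intro m
    refine le_antisymm (ge_of_tendsto hlim ?_) (zero_le)
    filter_upwards [Filter.eventually_ge_atTop m] with n hn
    exact (measure_mono (hmono hn)).trans (hle n)
  exact ⟨measure_iUnion_null hz, hG0 ▸ hz 0⟩
end
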